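/- arXiv:2209.12246 — 2 statements merged into one kernel-verified Lean document; each statement's English description precedes it below -/
import Mathlib

section
/- Let Ω be a class of unital C*-algebras and let A be a simple unital C*-algebra such that A and all algebras in Ω are unital. If A belongs to the class WTAΩ, then A belongs to the class GTAΩ. -/
open Filter Topology

/-- An element of a C*-algebra is positive if it is of the form `x* x`. -/
def IsPos {A : Type*} [Mul A] [Star A] (a : A) : Prop := ∃ x : A, a = star x * x

/-- Cuntz subequivalence `a ≾_A b`. -/
def CuntzBelow {A : Type*} [NonUnitalNormedRing A] [Star A] (a b : A) : Prop :=
  ∃ v : ℕ → A, Tendsto (fun n => ‖v n * b * star (v n) - a‖) atTop (nhds 0)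

/-- `x ∈_ε S`: `x` lies within `ε` of the set `S`. -/
def ApproxIn {A : Type*} [NormedAddGroup A] (x : A) (S : Set A) (ε : ℝ) : Prop :=
  ∃ y ∈ S, ‖x - y‖ < ε

/-- `(a - ε)₊`, via continuous functional calculus. -/
noncomputable def CutPos {A : Type*} [CStarAlgebra A] (a : A) (ε : ℝ) : A :=
  cfc (fun t : ℝ => max (t - ε) 0) a

/-- A C*-algebra is simple if it is nontrivial and has no proper nontrivial
closed two-sided ideals. -/
def IsSimpleCStarAlgebra (A : Type*) [NonUnitalNormedRing A] : Prop :=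
  Nontrivial A ∧ ∀ I : TwoSidedIdeal A, IsClosed (I : Set A) →
    (I : Set A) = {0} ∨ (I : Set A) = Set.univ

variable {A : Type*} [CStarAlgebra A]

/-- Membership in the class `WTAΩ` (Elliott–Fan–Fang weak tracial approximation),
where the class `Ω` is modelled as a set of (C*-)subalgebras of `A`. -/
def MemWTA (Ω : Set (NonUnitalStarSubalgebra ℂ A)) : Prop :=
  ∀ ε : ℝ, 0 < ε → ∀ F : Finset A, ∀ a : A, IsPos a → a ≠ 0 →
    ∃ B ∈ Ω, IsClosed (B : Set A) ∧
      ∃ p ∈ B, IsSelfAdjoint p ∧ p * p = p ∧ (∀ b ∈ B, p * b = b ∧ b * p = b) ∧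
        ∃ g ∈ B, IsPos g ∧ IsPos (1 - g) ∧
          (∀ x ∈ F, ApproxIn ((p - g) * x) (B : Set A) ε ∧
            ApproxIn (x * (p - g)) (B : Set A) ε) ∧
          (∀ x ∈ F, ‖(p - g) * x - x * (p - g)‖ < ε) ∧
          CuntzBelow (1 - (p - g)) a ∧
          ‖a‖ - ε ≤ ‖(p - g) * a * (p - g)‖

/-- Membership in the class `GTAΩ` (generalized/weak tracial approximation),
where the class `Ω` is modelled as a set of (C*-)subalgebras of `A`. -/
def MemGTA (Ω : Set (NonUnitalStarSubalgebra ℂ A)) : Prop :=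
  ∀ ε : ℝ, 0 < ε → ∀ F : Finset A, ∀ a b : A, IsPos a → ‖a‖ = 1 → IsPos b → ‖b‖ ≤ 1 →
    ∃ B ∈ Ω, IsClosed (B : Set A) ∧
      ∃ r ∈ B, IsPos r ∧ ‖r‖ ≤ 1 ∧
        (∀ x ∈ F, ApproxIn (r * x) (B : Set A) ε ∧ ApproxIn (x * r) (B : Set A) ε) ∧
        (∀ x ∈ F, ‖r * x - x * r‖ < ε) ∧
        CuntzBelow (CutPos (b * b - b * r * b) ε) a ∧
        1 - ε ≤ ‖r * a * r‖

/-!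
The witness is `r = p - g`. Since `p` is the unit of `B`, `r = p (1 - g) p`, so `0 ≤ r ≤ p`.
Moreover `b² - b r b = b (1 - r) b` and `(c - ε)₊ = f(c) c f(c)` for a suitable continuous `f`,
so `(b² - b r b - ε)₊` arises from `1 - r` by two conjugations, and conjugating the smaller
element preserves Cuntz subequivalence.
-/

theorem IsPos.isSelfAdjoint {R : Type*} [Mul R] [StarMul R] {a : R} (ha : IsPos a) :
    IsSelfAdjoint a := by
  obtain ⟨x, rfl⟩ := ha
  exact .star_mul_self x

theorem IsPos.star_mul_mul {R : Type*} [Semigroup R] [StarMul R] {a : R} (ha : IsPos a) (x : R) :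
    IsPos (star x * a * x) := by
  obtain ⟨y, rfl⟩ := ha
  exact ⟨y * x, by simp only [star_mul, mul_assoc]⟩

theorem IsPos.sub_of_one_sub {R : Type*} [Ring R] [StarRing R] {p g : R} (hg : IsPos (1 - g))
    (hp : IsStarProjection p) (hpg : p * g = g) (hgp : g * p = g) :
    IsPos (p - g) := by
  have h : p - g = star p * (1 - g) * p := by
    rw [hp.isSelfAdjoint.star_eq, mul_sub, sub_mul, mul_one, hp.isIdempotentElem.eq, hpg, hgp]
  exact h ▸ hg.star_mul_mul p

theorem isPos_iff_nonneg {A : Type*} [NonUnitalCStarAlgebra A] [PartialOrder A] [StarOrderedRing A]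
    {a : A} : IsPos a ↔ 0 ≤ a :=
  CStarAlgebra.nonneg_iff_eq_star_mul_self.symm

theorem IsPos.norm_sub_le {A : Type*} [NonUnitalCStarAlgebra A] {a b : A} (hb : IsPos b)
    (hab : IsPos (a - b)) : ‖a - b‖ ≤ ‖a‖ := by
  let _ := CStarAlgebra.spectralOrder A
  have := CStarAlgebra.spectralOrderedRing A
  rw [isPos_iff_nonneg] at hb hab
  exact CStarAlgebra.norm_le_norm_of_nonneg_of_le hab (sub_le_self a hb)

theorem CuntzBelow.conj {R : Type*} [NonUnitalNormedRing R] [StarMul R] {a b : R}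
    (h : CuntzBelow a b) (w : R) : CuntzBelow (w * a * star w) b := by
  simp only [CuntzBelow, ← tendsto_iff_norm_sub_tendsto_zero] at h ⊢
  obtain ⟨v, hv⟩ := h
  refine ⟨fun n => w * v n, ?_⟩
  simpa only [star_mul, mul_assoc] using (hv.const_mul w).mul_const (star w)

theorem exists_continuous_mul_mul_eq_max_sub {ε : ℝ} (hε : 0 < ε) :
    ∃ f : ℝ → ℝ, Continuous f ∧ ∀ t, f t * t * f t = max (t - ε) 0 := by
  have hpos (t : ℝ) : 0 < max t ε := lt_max_of_lt_right hε
  have hcont : Continuous fun t : ℝ => max (t - ε) 0 / max t ε :=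
    .div (by fun_prop) (by fun_prop) fun t => (hpos t).ne'
  refine ⟨fun t => √(max (t - ε) 0 / max t ε), hcont.sqrt, fun t => ?_⟩
  rw [mul_right_comm, Real.mul_self_sqrt (div_nonneg (le_max_right _ _) (hpos t).le)]
  rcases le_total t ε with ht | ht
  · simp [max_eq_right (sub_nonpos.2 ht)]
  · rw [max_eq_left ht, div_mul_cancel₀ _ (hε.trans_le ht).ne']

theorem cfc_mul_self_mul_star_cfc {R A : Type*} {P : A → Prop} [CommSemiring R] [StarRing R]
    [MetricSpace R] [IsTopologicalSemiring R] [ContinuousStar R] [TopologicalSpace A] [Ring A]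
    [StarRing A] [Algebra R A] [ContinuousFunctionalCalculus R A P] {c : A} (hc : P c) {f : R → R}
    (hf : ContinuousOn f (spectrum R c)) :
    cfc f c * c * star (cfc f c) = cfc (fun t => f t * t * star (f t)) c := by
  rw [cfc_mul (fun t => f t * t) (fun t => star (f t)) c (by fun_prop) hf.star,
    cfc_mul f (fun t => t) c hf, cfc_star, cfc_id' R c]

theorem CuntzBelow.cutPos {a c : A} (h : CuntzBelow c a) (hc : IsSelfAdjoint c) {ε : ℝ}
    (hε : 0 < ε) : CuntzBelow (CutPos c ε) a := by
  obtain ⟨f, hf, hf_eq⟩ := exists_continuous_mul_mul_eq_max_sub hε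
  have hcut : CutPos c ε = cfc f c * c * star (cfc f c) := by
    simp only [cfc_mul_self_mul_star_cfc hc hf.continuousOn, star_trivial, hf_eq, CutPos]
  exact hcut ▸ h.conj (cfc f c)

theorem CuntzBelow.cutPos_mul_self_sub_mul_mul {a b r : A} (h : CuntzBelow (1 - r) a)
    (hb : IsSelfAdjoint b) (hr : IsSelfAdjoint r) {ε : ℝ} (hε : 0 < ε) :
    CuntzBelow (CutPos (b * b - b * r * b) ε) a := by
  have hconj : b * b - b * r * b = b * (1 - r) * star b := by
    rw [hb.star_eq, mul_sub, sub_mul, mul_one]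
  rw [hconj]
  exact (h.conj b).cutPos (((IsSelfAdjoint.one A).sub hr).conjugate b) hε

theorem memGTA_of_memWTA_general (Ω : Set (NonUnitalStarSubalgebra ℂ A)) (h : MemWTA Ω) :
    MemGTA Ω := by
  intro ε hε F a b ha ha_norm hb _
  have ha_ne : a ≠ 0 := norm_ne_zero_iff.1 (ha_norm ▸ one_ne_zero)
  obtain ⟨B, hBΩ, hB_closed, p, hpB, hp_star, hp_idem, hp_unit, g, hgB, hg, hg_one,
    happrox, hcomm, hcuntz, hnorm⟩ := h ε hε F a ha ha_ne
  have hp : IsStarProjection p := ⟨hp_idem, hp_star⟩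
  have hr : IsPos (p - g) := hg_one.sub_of_one_sub hp (hp_unit g hgB).1 (hp_unit g hgB).2
  have hr_norm : ‖p - g‖ ≤ 1 := (hg.norm_sub_le hr).trans hp.norm_le
  exact ⟨B, hBΩ, hB_closed, p - g, sub_mem hpB hgB, hr, hr_norm, happrox, hcomm,
    hcuntz.cutPos_mul_self_sub_mul_mul hb.isSelfAdjoint hr.isSelfAdjoint hε, ha_norm ▸ hnorm⟩

/-- If `A` is a simple unital C*-algebra, `Ω` is a class of unital
C*-algebras, and `A ∈ WTAΩ`, then `A ∈ GTAΩ`. -/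
theorem memGTA_of_memWTA
    (hA : IsSimpleCStarAlgebra A)
    (Ω : Set (NonUnitalStarSubalgebra ℂ A))
    (hΩ : ∀ B ∈ Ω, ∃ e ∈ B, ∀ b ∈ B, e * b = b ∧ b * e = b)
    (h : MemWTA Ω) : MemGTA Ω :=
  memGTA_of_memWTA_general Ω h
end

section
/- For every ε ∈ (0,1) and every M ≥ 1 there exists δ > 0 with the following property. Let A be a unital C*-algebra, B ⊆ A a C*-subalgebra, r₀ ∈ B with 0 ≤ r₀ ≤ 1, and x ∈ A with ‖x‖ ≤ M. Define continuous functions on [0,1]: f'(t) = 0 for t ≤ ε/3, f'(t) linear on [ε/3, 1−ε/3], f'(t) = 1 for t ≥ 1−ε/3; f₁(t) = 0 for t ≤ ε/6, f₁(t) linear on [ε/6, ε/3], f₁(t) = 1 for t ≥ ε/3 (so that f₁·f' = f'); and let h be the continuous function on [0,1] with h(0) = 0 and t·h(t) = f₁(t). If there exists b ∈ B with ‖b − r₀x‖ < δ and if ‖r₀x − xr₀‖ < δ, then the element y = h(r₀)·b + (1_A − f₁(r₀))^{1/2} · x · (1_A − f₁(r₀))^{1/2} satisfies: f'(r₀)·y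 ∈ B, y·f'(r₀) ∈ B, and ‖y − x‖ < ε. -/
open Filter Topology

/-!
Write `r = r₀` and `s = (1 - f₁(r))^(1/2)`. Since `h(r) r + s² = 1`, the error splits as
`y - x = h(r) (b - r x) - s (s x - x s)`. The first term is small by the choice of `b`. The second
is small because `s`, a continuous function of `r`, is uniformly approximated by a polynomial in
`r`, and the commutator of `x` with a polynomial in `r` is controlled by that of `x` with `r`, with
a constant independent of the algebra. Finally `f' (1 - f₁) = 0` gives `f'(r) s = 0`, so multiplying
`y` by `f'(r)` leaves only the part of `y` lying in `B`.
-/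

open Set

section NormedRing

variable {A : Type*}

theorem norm_pow_mul_le [SeminormedRing A] (r x : A) (n : ℕ) : ‖r ^ n * x‖ ≤ ‖r‖ ^ n * ‖x‖ := by
  induction n with
  | zero => simp
  | succ n ih =>
    rw [pow_succ', pow_succ', mul_assoc, mul_assoc]
    exact norm_mul_le_of_le le_rfl ih

theorem norm_pow_mul_sub_mul_pow_le [SeminormedRing A] (r x : A) (n : ℕ) :
    ‖r ^ n * x - x * r ^ n‖ ≤ n * ‖r‖ ^ (n - 1) * ‖r * x - x * r‖ := by
  induction n with
  | zero => simp
  | succ n ih =>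
    have leibniz : r ^ (n + 1) * x - x * r ^ (n + 1) =
        r ^ n * (r * x - x * r) + (r ^ n * x - x * r ^ n) * r := by
      rw [pow_succ]
      noncomm_ring
    calc ‖r ^ (n + 1) * x - x * r ^ (n + 1)‖
        ≤ ‖r‖ ^ n * ‖r * x - x * r‖ + n * ‖r‖ ^ (n - 1) * ‖r * x - x * r‖ * ‖r‖ := by
          rw [leibniz]
          exact norm_add_le_of_le (norm_pow_mul_le _ _ _) (norm_mul_le_of_le ih le_rfl)
      _ = (n + 1 : ℕ) * ‖r‖ ^ (n + 1 - 1) * ‖r * x - x * r‖ := by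
          cases n with
          | zero => simp
          | succ n =>
            simp only [Nat.add_sub_cancel]
            push_cast
            ring

open Polynomial in
theorem exists_norm_aeval_mul_sub_mul_aeval_le (q : ℝ[X]) {R : ℝ} (hR : 0 ≤ R) :
    ∃ C : ℝ, 0 ≤ C ∧ ∀ (A : Type*) [SeminormedRing A] [NormedAlgebra ℝ A] (r x : A), ‖r‖ ≤ R →
      ‖aeval r q * x - x * aeval r q‖ ≤ C * ‖r * x - x * r‖ := by
  induction q using Polynomial.induction_on' with
  | add p q hp hq =>
    obtain ⟨C, hC, hp⟩ := hp
    obtain ⟨D, hD, hq⟩ := hq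
    refine ⟨C + D, add_nonneg hC hD, fun A _ _ r x hr => ?_⟩
    rw [map_add, add_mul, mul_add, add_sub_add_comm, add_mul]
    exact norm_add_le_of_le (hp A r x hr) (hq A r x hr)
  | monomial n c =>
    refine ⟨|c| * (n * R ^ (n - 1)), by positivity, fun A _ _ r x hr => ?_⟩
    rw [aeval_monomial, ← Algebra.smul_def, smul_mul_assoc, mul_smul_comm, ← smul_sub, norm_smul,
      Real.norm_eq_abs, mul_assoc]
    gcongr
    exact (norm_pow_mul_sub_mul_pow_le r x n).trans (by gcongr)

theorem norm_mul_add_mul_mul_sub_le [SeminormedRing A] {h r s : A} (hrs : h * r + s * s = 1)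
    (b x : A) :
    ‖h * b + s * x * s - x‖ ≤ ‖h‖ * ‖b - r * x‖ + ‖s‖ * ‖s * x - x * s‖ := by
  have error_eq : h * b + s * x * s - x = h * (b - r * x) - s * (s * x - x * s) := by
    calc h * b + s * x * s - x = h * b + s * x * s - (h * r + s * s) * x := by rw [hrs, one_mul]
      _ = h * (b - r * x) - s * (s * x - x * s) := by noncomm_ring
  rw [error_eq]
  exact norm_sub_le_of_le (norm_mul_le _ _) (norm_mul_le _ _)

end NormedRing

section MulMemClass

variable {A S : Type*} [NonUnitalSemiring A] [SetLike S A] [MulMemClass S A] {B : S} {b g h s : A}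

theorem mul_mul_add_mul_mul_mem (hg : g ∈ B) (hh : h ∈ B) (hb : b ∈ B) (hgs : g * s = 0) (x : A) :
    g * (h * b + s * x * s) ∈ B := by
  have : g * (h * b + s * x * s) = g * (h * b) := by
    simp only [mul_add, ← mul_assoc, hgs, zero_mul, add_zero]
  exact this ▸ mul_mem hg (mul_mem hh hb)

theorem mul_add_mul_mul_mul_mem (hg : g ∈ B) (hh : h ∈ B) (hb : b ∈ B) (hsg : s * g = 0) (x : A) :
    (h * b + s * x * s) * g ∈ B := by
  have : (h * b + s * x * s) * g = h * b * g := by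
    simp only [add_mul, mul_assoc, hsg, mul_zero, add_zero]
  exact this ▸ mul_mem (mul_mem hh hb) hg

end MulMemClass

section UniformBounds

theorem exists_norm_cfc_le {K : Set ℝ} (hK : IsCompact K) {f : ℝ → ℝ} (hf : ContinuousOn f K) :
    ∃ C : ℝ, 0 ≤ C ∧ ∀ (A : Type*) [CStarAlgebra A] (r : A), spectrum ℝ r ⊆ K → ‖cfc f r‖ ≤ C := by
  obtain ⟨C, hC⟩ := hK.exists_bound_of_continuousOn hf
  exact ⟨max C 0, le_max_right _ _, fun A _ r hr =>
    norm_cfc_le (le_max_right _ _) fun t ht => (hC t (hr ht)).trans (le_max_left _ _)⟩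

theorem norm_le_max_abs_of_spectrum_subset_Icc {A : Type*} [CStarAlgebra A] {r : A}
    (hr : IsSelfAdjoint r) {α β : ℝ} (hσ : spectrum ℝ r ⊆ Icc α β) : ‖r‖ ≤ max |α| |β| := by
  rw [← cfc_id ℝ r]
  exact norm_cfc_le (by positivity) fun t ht => abs_le_max_abs_abs (hσ ht).1 (hσ ht).2

theorem exists_norm_cfc_mul_sub_mul_cfc_le {α β : ℝ} {f : ℝ → ℝ} (hf : ContinuousOn f (Icc α β))
    {η : ℝ} (hη : 0 < η) :
    ∃ C : ℝ, 0 ≤ C ∧ ∀ (A : Type*) [CStarAlgebra A] (r : A), IsSelfAdjoint r →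
      spectrum ℝ r ⊆ Icc α β → ∀ x : A,
        ‖cfc f r * x - x * cfc f r‖ ≤ η * ‖x‖ + C * ‖r * x - x * r‖ := by
  obtain ⟨q, hq⟩ := exists_polynomial_near_of_continuousOn α β f hf (η / 2) (half_pos hη)
  obtain ⟨C, hC, hcomm⟩ :=
    exists_norm_aeval_mul_sub_mul_aeval_le q (R := max |α| |β|) (by positivity)
  refine ⟨C, hC, fun A _ r hr hσ x => ?_⟩
  set p := Polynomial.aeval r q with hp
  have hfr : ContinuousOn f (spectrum ℝ r) := hf.mono hσ
  have approx : ‖cfc f r - p‖ ≤ η / 2 := by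
    rw [hp, ← cfc_polynomial q r, ← cfc_sub f q.eval r]
    refine norm_cfc_le (half_pos hη).le fun t ht => ?_
    rw [Real.norm_eq_abs, abs_sub_comm]
    exact (hq t (hσ ht)).le
  calc ‖cfc f r * x - x * cfc f r‖
      = ‖(cfc f r - p) * x - x * (cfc f r - p) + (p * x - x * p)‖ := by congr 1; noncomm_ring
    _ ≤ η / 2 * ‖x‖ + ‖x‖ * (η / 2) + C * ‖r * x - x * r‖ :=
        norm_add_le_of_le
          (norm_sub_le_of_le (norm_mul_le_of_le approx le_rfl) (norm_mul_le_of_le le_rfl approx))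
          (hcomm A r x (norm_le_max_abs_of_spectrum_subset_Icc hr hσ))
    _ = η * ‖x‖ + C * ‖r * x - x * r‖ := by ring

end UniformBounds

section FunctionalCalculus

variable {A : Type*} [CStarAlgebra A] {r : A} {f g h : ℝ → ℝ}

theorem cfc_mem_of_map_zero {B : NonUnitalStarSubalgebra ℂ A} (hB : IsClosed (B : Set A))
    (hr : r ∈ B) (hf : ContinuousOn f (quasispectrum ℝ r)) (hf0 : f 0 = 0) : cfc f r ∈ B := by
  rw [← cfcₙ_eq_cfc]
  exact cfcₙ_mem (𝕜' := ℂ) (hs := hB) f hr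

theorem cfc_mul_cfc_eq_zero (hf : ContinuousOn f (spectrum ℝ r))
    (hg : ContinuousOn g (spectrum ℝ r)) (hfg : ∀ t ∈ spectrum ℝ r, f t * g t = 0) :
    cfc f r * cfc g r = 0 := by
  rw [← cfc_mul f g r, cfc_congr hfg, cfc_const_zero]

theorem cfc_sqrt_one_sub_mul_self (hr : IsSelfAdjoint r) (hf : ContinuousOn f (spectrum ℝ r))
    (hf_le : ∀ t ∈ spectrum ℝ r, f t ≤ 1) :
    cfc (fun t => √(1 - f t)) r * cfc (fun t => √(1 - f t)) r = 1 - cfc f r := by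
  rw [← cfc_mul _ _ r, ← cfc_const_one ℝ r, ← cfc_sub _ f r]
  exact cfc_congr fun t ht => Real.mul_self_sqrt (sub_nonneg.mpr (hf_le t ht))

theorem cfc_mul_self_eq_cfc (hr : IsSelfAdjoint r) (hh : ContinuousOn h (spectrum ℝ r))
    (hhf : ∀ t ∈ spectrum ℝ r, t * h t = f t) : cfc h r * r = cfc f r := by
  calc cfc h r * r = cfc h r * cfc (fun t => t) r := by rw [cfc_id' ℝ r]
    _ = cfc (fun t => h t * t) r := (cfc_mul h _ r).symm
    _ = cfc f r := cfc_congr fun t ht => (mul_comm _ _).trans (hhf t ht)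

end FunctionalCalculus

section Compression

variable {α β : ℝ} {f' f₁ h : ℝ → ℝ} {ε : ℝ}

theorem continuousOn_of_mul_self_eq {K : Set ℝ} (hh : ContinuousOn h K)
    (hhf₁ : ∀ t ∈ K, t * h t = f₁ t) : ContinuousOn f₁ K :=
  (continuousOn_id.mul hh).congr fun t ht => (hhf₁ t ht).symm

theorem exists_delta_norm_compression_sub_lt (hh : ContinuousOn h (Icc α β))
    (hhf₁ : ∀ t ∈ Icc α β, t * h t = f₁ t) (hf₁_le : ∀ t ∈ Icc α β, f₁ t ≤ 1) (M : ℝ)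
    (hε : 0 < ε) :
    ∃ δ : ℝ, 0 < δ ∧ ∀ (A : Type*) [CStarAlgebra A] (r : A), IsSelfAdjoint r →
      spectrum ℝ r ⊆ Icc α β → ∀ x b : A, ‖x‖ ≤ M →
        ‖b - r * x‖ < δ → ‖r * x - x * r‖ < δ →
          let s : A := cfc (fun t => √(1 - f₁ t)) r
          ‖cfc h r * b + s * x * s - x‖ < ε := by
  have hf₁ : ContinuousOn f₁ (Icc α β) := continuousOn_of_mul_self_eq hh hhf₁
  have hs : ContinuousOn (fun t => √(1 - f₁ t)) (Icc α β) := by fun_prop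
  obtain ⟨H, hH, norm_h_le⟩ := exists_norm_cfc_le isCompact_Icc hh
  obtain ⟨S, hS, norm_s_le⟩ := exists_norm_cfc_le isCompact_Icc hs
  obtain ⟨η, hη, hη_lt⟩ := exists_pos_mul_lt (half_pos hε) (S * |M|)
  obtain ⟨C, hC, comm_le⟩ := exists_norm_cfc_mul_sub_mul_cfc_le hs hη
  obtain ⟨δ, hδ, hδ_lt⟩ := exists_pos_mul_lt (half_pos hε) (H + S * C)
  refine ⟨δ, hδ, fun A _ r hr hσ x b hx hb hrx => ?_⟩
  intro s
  have hrs : cfc h r * r + s * s = 1 := by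
    rw [cfc_mul_self_eq_cfc hr (hh.mono hσ) fun t ht => hhf₁ t (hσ ht),
      cfc_sqrt_one_sub_mul_self hr (hf₁.mono hσ) fun t ht => hf₁_le t (hσ ht), add_sub_cancel]
  calc ‖cfc h r * b + s * x * s - x‖
      ≤ ‖cfc h r‖ * ‖b - r * x‖ + ‖s‖ * ‖s * x - x * s‖ := norm_mul_add_mul_mul_sub_le hrs b x
    _ ≤ H * δ + S * (η * |M| + C * δ) := by
        gcongr
        · exact norm_h_le A r hσ
        · exact norm_s_le A r hσ
        · refine (comm_le A r hr hσ x).trans ?_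
          gcongr
          exact hx.trans (le_abs_self M)
    _ = (H + S * C) * δ + S * |M| * η := by ring
    _ < ε := by linarith

theorem exists_delta_exact_compression_general (zero_mem_Icc : 0 ∈ Icc α β)
    (hf' : ContinuousOn f' (Icc α β)) (hh : ContinuousOn h (Icc α β)) (hh_zero : h 0 = 0)
    (hhf₁ : ∀ t ∈ Icc α β, t * h t = f₁ t) (hf₁_le : ∀ t ∈ Icc α β, f₁ t ≤ 1)
    (hf₁f' : ∀ t ∈ Icc α β, f₁ t * f' t = f' t) (M : ℝ) (hε : 0 < ε) :
    ∃ δ : ℝ, 0 < δ ∧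
      ∀ (A : Type*) [CStarAlgebra A] (B : NonUnitalStarSubalgebra ℂ A), IsClosed (B : Set A) →
        ∀ r ∈ B, IsSelfAdjoint r → spectrum ℝ r ⊆ Icc α β →
        ∀ x : A, ‖x‖ ≤ M →
        ∀ b ∈ B, ‖b - r * x‖ < δ → ‖r * x - x * r‖ < δ →
          let s : A := cfc (fun t => √(1 - f₁ t)) r
          let y : A := cfc h r * b + s * x * s
          cfc f' r * y ∈ B ∧ y * cfc f' r ∈ B ∧ ‖y - x‖ < ε := by
  obtain ⟨δ, hδ, norm_sub_lt⟩ := exists_delta_norm_compression_sub_lt hh hhf₁ hf₁_le M hε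
  refine ⟨δ, hδ, fun A _ B hB r hrB hr hσ x hx b hb hbδ hxδ => ?_⟩
  intro s y
  have hσ' : quasispectrum ℝ r ⊆ Icc α β := by
    rw [quasispectrum_eq_spectrum_union_zero]
    exact union_subset hσ (singleton_subset_iff.mpr zero_mem_Icc)
  have hf'_zero : f' 0 = 0 := by
    rw [← hf₁f' 0 zero_mem_Icc, ← hhf₁ 0 zero_mem_Icc, zero_mul, zero_mul]
  have hf'B : cfc f' r ∈ B := cfc_mem_of_map_zero hB hrB (hf'.mono hσ') hf'_zero
  have hhB : cfc h r ∈ B := cfc_mem_of_map_zero hB hrB (hh.mono hσ') hh_zero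
  have hf₁ : ContinuousOn f₁ (Icc α β) := continuousOn_of_mul_self_eq hh hhf₁
  have hs : ContinuousOn (fun t => √(1 - f₁ t)) (Icc α β) := by fun_prop
  have hf's : cfc f' r * s = 0 := by
    refine cfc_mul_cfc_eq_zero (hf'.mono hσ) (hs.mono hσ) fun t ht => ?_
    rcases eq_or_ne (f' t) 0 with hf't | hf't
    · rw [hf't, zero_mul]
    · rw [(mul_eq_right₀ hf't).mp (hf₁f' t (hσ ht)), sub_self, Real.sqrt_zero, mul_zero]
  have hsf' : s * cfc f' r = 0 := (cfc_commute_cfc _ _ r).eq.trans hf's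
  exact ⟨mul_mul_add_mul_mul_mem hf'B hhB hb hf's x, mul_add_mul_mul_mul_mem hf'B hhB hb hsf' x,
    norm_sub_lt A r hr hσ x b hx hbδ hxδ⟩

end Compression

/-- The piecewise linear cutoff function that is `0` up to `a`, rises linearly on `[a, a + w]`, and
is `1` from `a + w` on; both `f'` and `f₁` are of this form. Parametrising by the width `w` of the
rise, rather than by its right endpoint, makes this agreement definitional. -/
noncomputable def ramp (a w t : ℝ) : ℝ := max 0 (min 1 ((t - a) / w))

section Ramp

variable {a w : ℝ}

theorem continuous_ramp (a w : ℝ) : Continuous (ramp a w) := by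
  unfold ramp
  fun_prop

theorem ramp_le_one (a w t : ℝ) : ramp a w t ≤ 1 := max_le zero_le_one (min_le_left _ _)

theorem ramp_of_le (hw : 0 ≤ w) {t : ℝ} (ht : t ≤ a) : ramp a w t = 0 :=
  max_eq_left ((min_le_right _ _).trans (div_nonpos_of_nonpos_of_nonneg (sub_nonpos.mpr ht) hw))

theorem ramp_of_add_le (hw : 0 < w) {t : ℝ} (ht : a + w ≤ t) : ramp a w t = 1 := by
  have one_le : 1 ≤ (t - a) / w := (one_le_div₀ hw).mpr (le_sub_iff_add_le'.mpr ht)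
  rw [ramp, min_eq_left one_le, max_eq_right zero_le_one]

theorem ramp_mul_ramp (hw : 0 < w) {a' w' : ℝ} (hw' : 0 ≤ w') (ha' : a + w ≤ a') (t : ℝ) :
    ramp a w t * ramp a' w' t = ramp a' w' t := by
  rcases le_total t a' with ht | ht
  · rw [ramp_of_le hw' ht, mul_zero]
  · rw [ramp_of_add_le hw (ha'.trans ht), one_mul]

theorem mul_ramp_div_self (ha : 0 ≤ a) (hw : 0 ≤ w) (t : ℝ) : t * (ramp a w t / t) = ramp a w t :=
  mul_div_cancel_of_imp' fun ht => ramp_of_le hw (ht.trans_le ha)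

theorem continuous_ramp_div_self (ha : 0 < a) (hw : 0 ≤ w) :
    Continuous fun t => ramp a w t / t := by
  -- The ramp vanishes below `a`, so the denominator may be replaced by one bounded away from zero.
  have eq_div_max : (fun t => ramp a w t / t) = fun t => ramp a w t / max t a := by
    ext t
    rcases le_total t a with ht | ht
    · simp only [ramp_of_le hw ht, zero_div]
    · rw [max_eq_left ht]
  rw [eq_div_max]
  exact (continuous_ramp a w).div (by fun_prop) fun t => (ha.trans_le (le_max_right t a)).ne'

end Ramp

namespace IsPos

theorem isSelfAdjoint_s9 {A : Type*} [Semigroup A] [StarMul A] {a : A} (ha : IsPos a) :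
    IsSelfAdjoint a := by
  obtain ⟨x, rfl⟩ := ha
  exact IsSelfAdjoint.star_mul_self x

theorem nonneg_of_mem_spectrum {A : Type*} [CStarAlgebra A] {a : A} (ha : IsPos a) {t : ℝ}
    (ht : t ∈ spectrum ℝ a) : 0 ≤ t := by
  obtain ⟨x, rfl⟩ := ha
  exact spectrum_star_mul_self_nonneg t ht

theorem spectrum_subset_Icc {A : Type*} [CStarAlgebra A] {a : A} (ha : IsPos a)
    (ha' : IsPos (1 - a)) : spectrum ℝ a ⊆ Icc 0 1 := by
  refine fun t ht => ⟨ha.nonneg_of_mem_spectrum ht, sub_nonneg.mp (ha'.nonneg_of_mem_spectrum ?_)⟩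
  rw [← map_one (algebraMap ℝ A), ← spectrum.singleton_sub_eq]
  exact sub_mem_sub rfl ht

end IsPos

/-- For every `ε ∈ (0,1)` and `M ≥ 1` there is `δ > 0` such that for
every unital C*-algebra `A`, every C*-subalgebra `B ⊆ A`, every positive contraction
`r₀ ∈ B` and every `x ∈ A` with `‖x‖ ≤ M`, if `b ∈ B` satisfies `‖b - r₀ x‖ < δ` and
`‖r₀ x - x r₀‖ < δ`, then, with the functions `f'` (equal to `0` on `[0, ε/3]`,
linear on `[ε/3, 1 - ε/3]`, and `1` on `[1 - ε/3, 1]`), `f₁` (equal to `0` on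
`[0, ε/6]`, linear on `[ε/6, ε/3]`, and `1` on `[ε/3, 1]`, so that `f₁ ⬝ f' = f'`)
and `h` (with `h 0 = 0` and `t * h t = f₁ t`), the element
`y = h(r₀) ⬝ b + (1 - f₁(r₀))^(1/2) ⬝ x ⬝ (1 - f₁(r₀))^(1/2)` satisfies
`f'(r₀) ⬝ y ∈ B`, `y ⬝ f'(r₀) ∈ B` and `‖y - x‖ < ε`. -/
theorem exists_delta_exact_compression :
    ∀ ε : ℝ, 0 < ε → ε < 1 → ∀ M : ℝ, 1 ≤ M → ∃ δ : ℝ, 0 < δ ∧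
      ∀ (A : Type) [CStarAlgebra A] (B : NonUnitalStarSubalgebra ℂ A),
        IsClosed (B : Set A) →
        ∀ r₀ ∈ B, IsPos r₀ → IsPos (1 - r₀) →
        ∀ x : A, ‖x‖ ≤ M →
        ∀ b ∈ B, ‖b - r₀ * x‖ < δ → ‖r₀ * x - x * r₀‖ < δ →
          let f' : ℝ → ℝ := fun t => max 0 (min 1 ((t - ε / 3) / (1 - 2 * ε / 3)))
          let f₁ : ℝ → ℝ := fun t => max 0 (min 1 ((t - ε / 6) / (ε / 6)))
          let h : ℝ → ℝ := fun t => f₁ t / t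
          let s : A := cfc (fun t : ℝ => Real.sqrt (1 - f₁ t)) r₀
          let y : A := cfc h r₀ * b + s * x * s
          cfc f' r₀ * y ∈ B ∧ y * cfc f' r₀ ∈ B ∧ ‖y - x‖ < ε := by
  intro ε hε hε1 M _
  obtain ⟨δ, hδ, key⟩ := exists_delta_exact_compression_general (left_mem_Icc.mpr zero_le_one)
    (continuous_ramp (ε / 3) (1 - 2 * ε / 3)).continuousOn
    (continuous_ramp_div_self (a := ε / 6) (w := ε / 6) (by positivity)
      (by positivity)).continuousOn (div_zero _)
    (fun t _ => mul_ramp_div_self (by positivity) (by positivity) t)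
    (fun t _ => ramp_le_one _ _ t)
    (fun t _ => ramp_mul_ramp (by positivity) (by linarith) (by linarith) t) M hε
  exact ⟨δ, hδ, fun A _ B hB r hrB hr hr' =>
    key A B hB r hrB hr.isSelfAdjoint_s9 (hr.spectrum_subset_Icc hr')⟩
end
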